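/- Let n ≥ m ≥ 1 and let B_1,…,B_r ∈ ℝ^{n×m} satisfy Σ_{k=1}^r B_k^⊤B_k = I_m and Σ_{k=1}^r B_kB_k^⊤ ⪯ I_n. Let z_1,…,z_r be independent standard Gaussian real random variables on a probability space and set G = Σ_{k=1}^r z_k B_k. Then for every t > 0, ℙ(σmax(G) > t) ≤ 2m·e^{−t²/2}. -/

import Mathlib

open MeasureTheory ProbabilityTheory Matrix

/-- The largest singular value (spectral norm) of a real matrix. -/
noncomputable def sigmaMax {n m : ℕ} (G : Matrix (Fin n) (Fin m) ℝ) : ℝ :=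
  ‖LinearMap.toContinuousLinearMap (Matrix.toEuclideanLin G)‖

/-!
For a Hermitian Gaussian series `X = ∑ₖ zₖ Aₖ`, integration by parts in each `zₖ` gives
`E tr X^(2p+2) = ∑ₖ ∑_{i ≤ 2p} E tr (Aₖ X^(2p-i) Aₖ X^i)`. In an eigenbasis of `X` each summand is
a combination of the products `x^i y^j` of eigenvalues with nonnegative weights `|A_ab|²`, so the
rearrangement inequality bounds it by `E tr (Aₖ² X^(2p))`. If `∑ₖ Aₖ² ⪯ v`, the trace moments
therefore grow no faster than the scalar moments `(2p-1)‼ v^p`. Applied to the Hermitian dilations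
of the `Bₖ`, this bounds `E ‖G‖^(2p) ≤ E tr (Gᴴ G)^p` by `m` times a scalar Gaussian moment; the
factor is `m` and not `n + m` because the induction starts at `∑ₖ tr (Bₖᴴ Bₖ) ≤ m v`. Summing the
moments against the power series of `cosh` gives `E cosh (θ ‖G‖) ≤ m exp (v θ² / 2)`, and Markov's
inequality with `θ = t / v` concludes.
-/

section

open scoped NNReal ComplexOrder MatrixOrder

/-! ### Gaussian integration by parts -/

open scoped ContDiff in
theorem hasTemperateGrowth_fderiv_apply {E F : Type*} [NormedAddCommGroup E] [NormedSpace ℝ E]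
    [NormedAddCommGroup F] [NormedSpace ℝ F] {f : E → F} (hf : f.HasTemperateGrowth) (w : E) :
    (fun x => fderiv ℝ f x w).HasTemperateGrowth := by
  have hfderiv : (fderiv ℝ f).HasTemperateGrowth := by
    refine ⟨hf.1.fderiv_right (m := ∞) (by simp), fun n => ?_⟩
    obtain ⟨k, C, h⟩ := hf.2 (n + 1)
    exact ⟨k, C, fun x => norm_iteratedFDeriv_fderiv.trans_le (h x)⟩
  exact (ContinuousLinearMap.apply ℝ F w).hasTemperateGrowth.comp hfderiv

theorem integrable_of_hasTemperateGrowth {E F : Type*} [NormedAddCommGroup E] [NormedSpace ℝ E]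
    [CompleteSpace E] [SecondCountableTopology E] [MeasurableSpace E] [BorelSpace E]
    [NormedAddCommGroup F] [NormedSpace ℝ F] (γ : Measure E) [IsGaussian γ] {f : E → F}
    (hf : f.HasTemperateGrowth) : Integrable f γ := by
  obtain ⟨k, C, hC⟩ := hf.2 0
  have hbound : Integrable (fun x : E => C * (1 + ‖x‖) ^ k) γ := by
    have h := ((memLp_const (1 : ℝ)).add
      (IsGaussian.memLp_id γ k (by simp)).norm).integrable_norm_pow'
    refine (h.const_mul C).congr (ae_of_all _ fun x => ?_)
    simp [abs_of_nonneg (add_nonneg zero_le_one (norm_nonneg x))]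
  refine hbound.mono' hf.1.continuous.aestronglyMeasurable (ae_of_all _ fun x => ?_)
  simpa using hC x

instance isGaussian_pi {κ : Type*} [Fintype κ] (γ : κ → Measure ℝ) [∀ k, IsGaussian (γ k)] :
    IsGaussian (Measure.pi γ) := by
  have h : HasGaussianLaw (fun (x : κ → ℝ) k => x k) (Measure.pi γ) :=
    iIndepFun.hasGaussianLaw
      (fun k => ⟨by rw [(measurePreserving_eval γ k).map_eq]; infer_instance⟩)
      (iIndepFun_pi (X := fun _ x => x) fun _ => aemeasurable_id)
  simpa using h.isGaussian_map

theorem measurePreserving_update {κ : Type*} [Fintype κ] [DecidableEq κ] {α : κ → Type*}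
    [∀ i, MeasurableSpace (α i)] (γ : ∀ i, Measure (α i)) [∀ i, IsProbabilityMeasure (γ i)]
    (k : κ) :
    MeasurePreserving (fun p : (∀ i, α i) × α k => Function.update p.1 k p.2)
      ((Measure.pi γ).prod (γ k)) (Measure.pi γ) := by
  have hmeas : Measurable fun p : (∀ i, α i) × α k => Function.update p.1 k p.2 := by
    refine measurable_pi_lambda _ fun i => ?_
    rcases eq_or_ne i k with rfl | hik
    · simpa using measurable_snd
    · simp only [Function.update_of_ne hik]
      fun_prop
  refine ⟨hmeas, (Measure.pi_eq fun s hs => ?_).symm⟩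
  have hpre : (fun p : (∀ i, α i) × α k => Function.update p.1 k p.2) ⁻¹' Set.univ.pi s
      = (Set.univ.pi (Function.update s k Set.univ)) ×ˢ s k := by
    ext ⟨x, y⟩
    simp only [Set.mem_preimage, Set.mem_prod, Set.mem_univ_pi]
    constructor
    · exact fun h => ⟨fun i => by
        rcases eq_or_ne i k with rfl | hik
        · simp
        · simpa [hik] using h i, by simpa using h k⟩
    · rintro ⟨hx, hy⟩ i
      rcases eq_or_ne i k with rfl | hik
      · simpa using hy
      · simpa [hik] using hx i
  rw [Measure.map_apply hmeas (.univ_pi hs), hpre, Measure.prod_prod, Measure.pi_pi,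
    ← Finset.prod_erase_mul _ _ (Finset.mem_univ k),
    ← Finset.prod_erase_mul _ (fun i => γ i (s i)) (Finset.mem_univ k)]
  simp only [Function.update_self, measure_univ, mul_one]
  congr 1
  exact Finset.prod_congr rfl fun i hi => by rw [Function.update_of_ne (Finset.ne_of_mem_erase hi)]

theorem integral_integral_update {κ E : Type*} [Fintype κ] [DecidableEq κ] {α : κ → Type*}
    [∀ i, MeasurableSpace (α i)] [NormedAddCommGroup E] [NormedSpace ℝ E]
    (γ : ∀ i, Measure (α i)) [∀ i, IsProbabilityMeasure (γ i)] (k : κ) {g : (∀ i, α i) → E}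
    (hg : Integrable g (Measure.pi γ)) :
    ∫ x, ∫ s, g (Function.update x k s) ∂γ k ∂Measure.pi γ = ∫ x, g x ∂Measure.pi γ := by
  have hupdate := measurePreserving_update γ k
  calc ∫ x, ∫ s, g (Function.update x k s) ∂γ k ∂Measure.pi γ
      = ∫ p, g (Function.update p.1 k p.2) ∂(Measure.pi γ).prod (γ k) :=
        (integral_prod _ (hupdate.integrable_comp_of_integrable hg)).symm
    _ = ∫ x, g x ∂Measure.pi γ := by
        conv_rhs => rw [← hupdate.map_eq]
        exact (integral_map hupdate.aemeasurable
          (hupdate.map_eq.symm ▸ hg.aestronglyMeasurable)).symm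

theorem hasDerivAt_gaussianPDFReal (m : ℝ) {v : ℝ≥0} (hv : v ≠ 0) (x : ℝ) :
    HasDerivAt (gaussianPDFReal m v) (-((x - m) / v) * gaussianPDFReal m v x) x := by
  have hexponent : HasDerivAt (fun y : ℝ => -(y - m) ^ 2 / (2 * v)) (-((x - m) / v)) x := by
    refine ((((hasDerivAt_id x).sub_const m).pow 2).neg.div_const (2 * (v : ℝ))).congr_deriv ?_
    have : (v : ℝ) ≠ 0 := by exact_mod_cast hv
    simp
    field_simp
  exact (hexponent.exp.const_mul _).congr_deriv (by simp only [gaussianPDFReal]; ring)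

theorem integral_sub_smul_gaussianReal {E : Type*} [NormedAddCommGroup E] [NormedSpace ℝ E]
    (m : ℝ) (v : ℝ≥0) {f : ℝ → E} (hf : f.HasTemperateGrowth) :
    ∫ x, (x - m) • f x ∂gaussianReal m v = v • ∫ x, deriv f x ∂gaussianReal m v := by
  rcases eq_or_ne v 0 with rfl | hv
  · rw [zero_smul, gaussianReal_zero_var]
    exact integral_eq_zero_of_ae (by simp [ae_dirac_eq, Filter.EventuallyEq])
  have hdensity {g : ℝ → E} (hg : g.HasTemperateGrowth) :
      Integrable fun x => gaussianPDFReal m v x • g x := by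
    have h := integrable_of_hasTemperateGrowth (gaussianReal m v) hg
    rw [gaussianReal_of_var_ne_zero _ hv,
      integrable_withDensity_iff_integrable_smul' (by fun_prop) (by simp [gaussianPDF])] at h
    simpa [gaussianPDF, ENNReal.toReal_ofReal (gaussianPDFReal_nonneg _ _ _)] using h
  have hf' : (deriv f).HasTemperateGrowth := hasTemperateGrowth_fderiv_apply hf 1
  have hmul : (fun x => (x - m) • f x).HasTemperateGrowth := by fun_prop
  have hderiv (x : ℝ) : HasDerivAt (fun y => gaussianPDFReal m v y • f y)
      (gaussianPDFReal m v x • deriv f x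
        - (v : ℝ)⁻¹ • gaussianPDFReal m v x • (x - m) • f x) x := by
    have hfx : HasDerivAt f (deriv f x) x :=
      ((hf.1.differentiable (by simp)) x).hasDerivAt
    refine ((hasDerivAt_gaussianPDFReal m hv x).smul hfx).congr_deriv ?_
    module
  have hmul_int := (hdensity hmul).fun_smul (v : ℝ)⁻¹
  have hzero := integral_eq_zero_of_hasDerivAt_of_integrable hderiv
    ((hdensity hf').sub hmul_int) (hdensity hf)
  rw [integral_sub (hdensity hf') hmul_int, integral_smul, sub_eq_zero] at hzero
  rw [integral_gaussianReal_eq_integral_smul hv, integral_gaussianReal_eq_integral_smul hv,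
    hzero, NNReal.smul_def, smul_inv_smul₀ (by exact_mod_cast hv)]

theorem integral_sub_smul_pi_gaussianReal {κ E : Type*} [Fintype κ] [DecidableEq κ]
    [NormedAddCommGroup E] [NormedSpace ℝ E] (m : κ → ℝ) (v : κ → ℝ≥0) (k : κ)
    {f : (κ → ℝ) → E} (hf : f.HasTemperateGrowth) :
    ∫ x, (x k - m k) • f x ∂Measure.pi (fun i => gaussianReal (m i) (v i))
      = v k • ∫ x, fderiv ℝ f x (Pi.single k 1)
          ∂Measure.pi (fun i => gaussianReal (m i) (v i)) := by
  have hcoord : (fun x : κ → ℝ => x k).HasTemperateGrowth :=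
    (ContinuousLinearMap.proj k : (κ → ℝ) →L[ℝ] ℝ).hasTemperateGrowth
  have hsection (x : κ → ℝ) : (fun s => f (Function.update x k s)).HasTemperateGrowth := by
    have haffine : Function.update x k
        = fun s => (x - Pi.single k (x k)) + ContinuousLinearMap.single ℝ (fun _ => ℝ) k s := by
      ext s i
      rcases eq_or_ne i k with rfl | hik <;> simp [*]
    rw [haffine]
    fun_prop
  have hderiv (x : κ → ℝ) (s : ℝ) : deriv (fun s => f (Function.update x k s)) s
      = fderiv ℝ f (Function.update x k s) (Pi.single k 1) :=
    ((hf.1.differentiable (by simp) _).hasFDerivAt.comp_hasDerivAt s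
      (hasDerivAt_update x k s)).deriv
  have hint {g : (κ → ℝ) → E} (hg : g.HasTemperateGrowth) :
      Integrable g (Measure.pi fun i => gaussianReal (m i) (v i)) :=
    integrable_of_hasTemperateGrowth _ hg
  have hmul : (fun x => (x k - m k) • f x).HasTemperateGrowth :=
    (hcoord.sub (.const (m k))).smul hf
  rw [← integral_integral_update _ k (hint hmul),
    ← integral_integral_update _ k (hint (hasTemperateGrowth_fderiv_apply hf _))]
  simp only [Function.update_self, integral_sub_smul_gaussianReal _ _ (hsection _), hderiv,
    NNReal.smul_def, integral_smul]

/-- The standard Gaussian measure on `κ → ℝ`, i.e. the law of a family of independent standard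
Gaussians. It lives on the plain product rather than on `EuclideanSpace`, so that it is literally
the law of the coefficients of a Gaussian matrix series. -/
noncomputable abbrev stdGaussianPi (κ : Type*) [Fintype κ] : Measure (κ → ℝ) :=
  Measure.pi fun _ => gaussianReal 0 1

section

variable {κ R F : Type*} [Fintype κ] [NormedRing R] [NormedAlgebra ℝ R]
  [NormedAddCommGroup F] [NormedSpace ℝ F]

theorem hasTemperateGrowth_sum_smul (a : κ → R) :
    (fun x : κ → ℝ => ∑ k, x k • a k).HasTemperateGrowth :=
  .sum fun k _ => ((ContinuousLinearMap.proj k : (κ → ℝ) →L[ℝ] ℝ).smulRight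
    (a k)).hasTemperateGrowth

theorem integrable_map_mul_sum_smul_pow (a : κ → R) (b c : R) (i j : ℕ) (τ : R →L[ℝ] F) :
    Integrable (fun x => τ (b * (∑ k, x k • a k) ^ i * c * (∑ k, x k • a k) ^ j))
      (stdGaussianPi κ) := by
  have hX := hasTemperateGrowth_sum_smul a
  exact integrable_of_hasTemperateGrowth _ (by fun_prop)

theorem fderiv_map_mul_sum_smul_pow_apply_single [DecidableEq κ] (a : κ → R) (b : R) (q : ℕ)
    (τ : R →L[ℝ] F) (x : κ → ℝ) (k : κ) :
    fderiv ℝ (fun x : κ → ℝ => τ (b * (∑ k, x k • a k) ^ q)) x (Pi.single k 1)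
      = ∑ i ∈ Finset.range q,
          τ (b * (∑ k, x k • a k) ^ (q - 1 - i) * a k * (∑ k, x k • a k) ^ i) := by
  have hX : HasFDerivAt (fun x : κ → ℝ => ∑ k, x k • a k)
      (∑ k, (ContinuousLinearMap.proj k : (κ → ℝ) →L[ℝ] ℝ).smulRight (a k)) x :=
    .fun_sum fun k _ => ((ContinuousLinearMap.proj k : (κ → ℝ) →L[ℝ] ℝ).smulRight
      (a k)).hasFDerivAt
  have hword := τ.hasFDerivAt.comp x ((hX.pow' q).const_mul b)
  refine (congrArg (· (Pi.single k 1)) hword.fderiv).trans ?_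
  simp [Finset.mul_sum, mul_assoc, Pi.single_apply]

theorem integral_map_sum_smul_pow_succ (a : κ → R) (τ : R →L[ℝ] F) (q : ℕ) :
    ∫ x, τ ((∑ k, x k • a k) ^ (q + 1)) ∂stdGaussianPi κ
      = ∑ k, ∑ i ∈ Finset.range q, ∫ x,
          τ (a k * (∑ k, x k • a k) ^ (q - 1 - i) * a k * (∑ k, x k • a k) ^ i)
            ∂stdGaussianPi κ := by
  classical
  have hX := hasTemperateGrowth_sum_smul a
  have hτ (k : κ) : (fun x : κ → ℝ => τ (a k * (∑ k, x k • a k) ^ q)).HasTemperateGrowth := by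
    fun_prop
  have hcoord (k : κ) : (fun x : κ → ℝ => x k).HasTemperateGrowth :=
    (ContinuousLinearMap.proj k : (κ → ℝ) →L[ℝ] ℝ).hasTemperateGrowth
  calc ∫ x, τ ((∑ k, x k • a k) ^ (q + 1)) ∂stdGaussianPi κ
      = ∫ x, ∑ k, x k • τ (a k * (∑ k, x k • a k) ^ q) ∂stdGaussianPi κ := by
        simp only [pow_succ', Finset.sum_mul, map_sum, smul_mul_assoc, map_smul]
    _ = ∑ k, ∫ x, x k • τ (a k * (∑ k, x k • a k) ^ q) ∂stdGaussianPi κ :=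
        integral_finsetSum _ fun k _ =>
          integrable_of_hasTemperateGrowth _ ((hcoord k).smul (hτ k))
    _ = _ := by
        refine Finset.sum_congr rfl fun k _ => ?_
        have hstein :=
          integral_sub_smul_pi_gaussianReal (fun _ : κ => 0) (fun _ => 1) k (hτ k)
        simp only [sub_zero, one_smul, fderiv_map_mul_sum_smul_pow_apply_single] at hstein
        rw [hstein, integral_finsetSum _ fun i _ => integrable_map_mul_sum_smul_pow ..]

end

/-! ### Trace inequalities for Hermitian matrices -/

theorem pow_mul_pow_add_pow_mul_pow_le (a b : ℝ) {i j p : ℕ} (h : i + j = 2 * p) :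
    a ^ i * b ^ j + a ^ j * b ^ i ≤ a ^ (2 * p) + b ^ (2 * p) := by
  have hsplit (c : ℝ) : c ^ (2 * p) = |c| ^ i * |c| ^ j := by
    rw [← pow_add, h, (even_two_mul p).pow_abs]
  have habs (k l : ℕ) : a ^ k * b ^ l ≤ |a| ^ k * |b| ^ l := by
    simpa only [abs_mul, abs_pow] using le_abs_self (a ^ k * b ^ l)
  have hrearrange : 0 ≤ (|a| ^ i - |b| ^ i) * (|a| ^ j - |b| ^ j) := by
    rcases le_total |a| |b| with hab | hab
    · exact mul_nonneg_of_nonpos_of_nonpos (sub_nonpos.2 (by gcongr)) (sub_nonpos.2 (by gcongr))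
    · exact mul_nonneg (sub_nonneg.2 (by gcongr)) (sub_nonneg.2 (by gcongr))
  rw [hsplit, hsplit]
  linarith [habs i j, habs j i]

section

variable {𝕜 n : Type*} [RCLike 𝕜] [Fintype n] [DecidableEq n]

theorem re_trace_mul_diagonal_pow_mul_mul_diagonal_pow {A : Matrix n n 𝕜} (hA : A.IsHermitian)
    (d : n → ℝ) (i j : ℕ) :
    RCLike.re (A * diagonal (RCLike.ofReal ∘ d) ^ i * A * diagonal (RCLike.ofReal ∘ d) ^ j).trace
      = ∑ a, ∑ b, ‖A a b‖ ^ 2 * (d b ^ i * d a ^ j) := by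
  have hentry (a b : n) : A a b * (d b : 𝕜) ^ i * (A b a * (d a : 𝕜) ^ j)
      = ((‖A a b‖ ^ 2 * (d b ^ i * d a ^ j) : ℝ) : 𝕜) := by
    rw [← hA.apply b a]
    push_cast
    rw [← RCLike.mul_conj, RCLike.star_def]
    ring
  simp only [diagonal_pow, trace, diag_apply, Matrix.mul_assoc (A * _) A,
    mul_apply (M := A * _), mul_diagonal, Pi.pow_apply, Function.comp_apply, hentry, map_sum,
    RCLike.ofReal_re]

theorem trace_conjStarAlgAut (U : unitary (Matrix n n 𝕜)) (A : Matrix n n 𝕜) :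
    (Unitary.conjStarAlgAut 𝕜 _ U A).trace = A.trace := by
  rw [Unitary.conjStarAlgAut_apply, trace_mul_cycle, Unitary.coe_star_mul_self, Matrix.one_mul]

theorem trace_pow_eq_sum_eigenvalues_pow {A : Matrix n n 𝕜} (hA : A.IsHermitian) (p : ℕ) :
    (A ^ p).trace = ∑ i, (hA.eigenvalues i : 𝕜) ^ p := by
  conv_lhs => rw [hA.spectral_theorem]
  rw [← map_pow, trace_conjStarAlgAut, diagonal_pow, trace_diagonal]
  rfl

theorem re_trace_mul_diagonal_pow_mul_mul_diagonal_pow_le {A : Matrix n n 𝕜}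
    (hA : A.IsHermitian) (d : n → ℝ) {i j p : ℕ} (h : i + j = 2 * p) :
    RCLike.re (A * diagonal (RCLike.ofReal ∘ d) ^ i * A * diagonal (RCLike.ofReal ∘ d) ^ j).trace
      ≤ RCLike.re (A * A * diagonal (RCLike.ofReal ∘ d) ^ (2 * p)).trace := by
  have hsymm (k l : ℕ) : ∑ a, ∑ b, ‖A a b‖ ^ 2 * (d b ^ k * d a ^ l)
      = ∑ a, ∑ b, ‖A a b‖ ^ 2 * (d a ^ k * d b ^ l) := by
    rw [Finset.sum_comm]
    refine Finset.sum_congr rfl fun a _ => Finset.sum_congr rfl fun b _ => ?_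
    rw [← hA.apply, norm_star]
  have hle : ∑ a, ∑ b, ‖A a b‖ ^ 2 * (d b ^ i * d a ^ j + d b ^ j * d a ^ i)
      ≤ ∑ a, ∑ b, ‖A a b‖ ^ 2 * (d b ^ (2 * p) + d a ^ (2 * p)) := by
    refine Finset.sum_le_sum fun a _ => Finset.sum_le_sum fun b _ => ?_
    gcongr ?_ * ?_
    exact pow_mul_pow_add_pow_mul_pow_le (d b) (d a) h
  have hij := re_trace_mul_diagonal_pow_mul_mul_diagonal_pow hA d i j
  have hp := re_trace_mul_diagonal_pow_mul_mul_diagonal_pow hA d 0 (2 * p)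
  have hij' := hsymm i j
  have hp' := hsymm 0 (2 * p)
  simp only [pow_zero, one_mul, Matrix.mul_one] at hp hp'
  simp only [mul_add, Finset.sum_add_distrib, mul_comm (d _ ^ j)] at hle
  linarith

theorem re_trace_mul_pow_mul_mul_pow_le {A X : Matrix n n 𝕜} (hA : A.IsHermitian)
    (hX : X.IsHermitian) {i j p : ℕ} (h : i + j = 2 * p) :
    RCLike.re (A * X ^ i * A * X ^ j).trace ≤ RCLike.re (A * A * X ^ (2 * p)).trace := by
  let φ := Unitary.conjStarAlgAut 𝕜 (Matrix n n 𝕜) hX.eigenvectorUnitary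
  have hAφ : A = φ (φ.symm A) := (φ.apply_symm_apply A).symm
  have hherm : (φ.symm A).IsHermitian := by
    rw [IsHermitian, ← star_eq_conjTranspose, ← map_star, star_eq_conjTranspose, hA.eq]
  have hdiag := re_trace_mul_diagonal_pow_mul_mul_diagonal_pow_le hherm hX.eigenvalues h
  rw [hAφ, hX.spectral_theorem]
  change RCLike.re (φ _ * φ _ ^ i * φ _ * φ _ ^ j).trace
    ≤ RCLike.re (φ _ * φ _ * φ _ ^ (2 * p)).trace
  simpa only [← map_pow, ← map_mul, φ, trace_conjStarAlgAut] using hdiag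

theorem re_trace_mul_pow_two_mul_le {V X : Matrix n n 𝕜} {v : ℝ} (hV : V ≤ v • 1)
    (hX : X.IsHermitian) (p : ℕ) :
    RCLike.re (V * X ^ (2 * p)).trace ≤ v * RCLike.re (X ^ (2 * p)).trace := by
  have h := ((Matrix.le_iff.1 hV).conjTranspose_mul_mul_same (X ^ p)).trace_nonneg
  have htrace : ((X ^ p)ᴴ * (v • 1 - V) * X ^ p).trace
      = (v : 𝕜) * (X ^ (2 * p)).trace - (V * X ^ (2 * p)).trace := by
    rw [(hX.pow p).eq, Matrix.mul_assoc, trace_mul_comm, Matrix.mul_assoc, ← pow_add, ← two_mul]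
    simp [Matrix.sub_mul, RCLike.real_smul_eq_coe_mul]
  rw [htrace, RCLike.nonneg_iff] at h
  simpa using h.1

open scoped Matrix.Norms.L2Operator in
theorem l2_opNorm_eq_norm_eigenvalues {A : Matrix n n 𝕜} (hA : A.IsHermitian) :
    ‖A‖ = ‖hA.eigenvalues‖ := by
  conv_lhs => rw [hA.spectral_theorem, Unitary.conjStarAlgAut_apply]
  rw [← Unitary.coe_star, CStarRing.norm_mul_coe_unitary, CStarRing.norm_coe_unitary_mul,
    l2_opNorm_diagonal]
  simp [Pi.norm_def]

open scoped Matrix.Norms.L2Operator in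
theorem l2_opNorm_pow_le_re_trace_pow [Nonempty n] {M : Matrix n n 𝕜} (hM : M.PosSemidef) (p : ℕ) :
    ‖M‖ ^ p ≤ RCLike.re (M ^ p).trace := by
  obtain ⟨i, hi⟩ := Finite.exists_max hM.1.eigenvalues
  have hpow (k : n) : 0 ≤ hM.1.eigenvalues k ^ p := pow_nonneg (hM.eigenvalues_nonneg k) p
  calc ‖M‖ ^ p ≤ hM.1.eigenvalues i ^ p := by
        rw [l2_opNorm_eq_norm_eigenvalues hM.1]
        gcongr
        refine (pi_norm_le_iff_of_nonempty _).2 fun k => ?_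
        rw [Real.norm_of_nonneg (hM.eigenvalues_nonneg k)]
        exact hi k
    _ ≤ ∑ k, hM.1.eigenvalues k ^ p :=
        Finset.single_le_sum (fun k _ => hpow k) (Finset.mem_univ i)
    _ = RCLike.re (M ^ p).trace := by
        rw [trace_pow_eq_sum_eigenvalues_pow hM.1]
        simp only [map_sum, ← RCLike.ofReal_pow, RCLike.ofReal_re]

end

open scoped Matrix.Norms.L2Operator in
theorem l2_opNorm_pow_two_mul_le_re_trace {𝕜 n m : Type*} [RCLike 𝕜] [Fintype n] [Fintype m]
    [DecidableEq m] [Nonempty m] (G : Matrix n m 𝕜) (p : ℕ) :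
    ‖G‖ ^ (2 * p) ≤ RCLike.re ((Gᴴ * G) ^ p).trace := by
  rw [pow_mul, sq, ← l2_opNorm_conjTranspose_mul_self]
  exact l2_opNorm_pow_le_re_trace_pow (posSemidef_conjTranspose_mul_self G) p

/-! ### The Hermitian dilation -/

theorem trace_mul_pow_succ_comm {α n m : Type*} [CommSemiring α] [Fintype n] [DecidableEq n]
    [Fintype m] [DecidableEq m] (G : Matrix n m α) (H : Matrix m n α) (p : ℕ) :
    ((G * H) ^ (p + 1)).trace = ((H * G) ^ (p + 1)).trace := by
  have hcomm (q : ℕ) : (G * H) ^ q * G = G * (H * G) ^ q := by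
    induction q with
    | zero => simp
    | succ q ih => simp only [pow_succ', Matrix.mul_assoc, ih]
  rw [pow_succ, ← Matrix.mul_assoc, hcomm, trace_mul_comm, ← Matrix.mul_assoc, ← pow_succ']

theorem trace_fromBlocks {α n m : Type*} [AddCommMonoid α] [Fintype n] [Fintype m]
    (A : Matrix n n α) (B : Matrix n m α) (C : Matrix m n α) (D : Matrix m m α) :
    (fromBlocks A B C D).trace = A.trace + D.trace := by
  simp [trace]

theorem posSemidef_fromBlocks_diagonal {𝕜 n m : Type*} [RCLike 𝕜] [Finite n] [Finite m]
    {A : Matrix n n 𝕜} {D : Matrix m m 𝕜} (hA : A.PosSemidef) (hD : D.PosSemidef) :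
    (fromBlocks A 0 0 D).PosSemidef := by
  classical
  have := Fintype.ofFinite n
  have := Fintype.ofFinite m
  obtain ⟨E, rfl⟩ := CStarAlgebra.nonneg_iff_eq_star_mul_self.1 hA.nonneg
  obtain ⟨F, rfl⟩ := CStarAlgebra.nonneg_iff_eq_star_mul_self.1 hD.nonneg
  simpa [star_eq_conjTranspose, fromBlocks_conjTranspose, fromBlocks_multiply] using
    posSemidef_conjTranspose_mul_self (fromBlocks E 0 0 F)

/-- The Hermitian dilation `[[0, G], [Gᴴ, 0]]` of a rectangular matrix `G`, which reduces moments
of `Gᴴ * G` to moments of a Hermitian matrix depending linearly on `G`. -/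
def hermitianDilation {𝕜 n m : Type*} [RCLike 𝕜] (G : Matrix n m 𝕜) :
    Matrix (n ⊕ m) (n ⊕ m) 𝕜 :=
  fromBlocks 0 G Gᴴ 0

section

variable {κ 𝕜 n m : Type*} [Fintype κ] [RCLike 𝕜]

theorem isHermitian_hermitianDilation (G : Matrix n m 𝕜) : (hermitianDilation G).IsHermitian := by
  simp [hermitianDilation, IsHermitian, fromBlocks_conjTranspose]

theorem isHermitian_sum_smul {A : κ → Matrix n n 𝕜} (hA : ∀ k, (A k).IsHermitian) (x : κ → ℝ) :
    (∑ k, x k • A k).IsHermitian := by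
  simp [IsHermitian, conjTranspose_sum, (hA _).eq]

theorem sum_smul_hermitianDilation (B : κ → Matrix n m 𝕜) (x : κ → ℝ) :
    ∑ k, x k • hermitianDilation (B k) = hermitianDilation (∑ k, x k • B k) := by
  ext (i | i) (j | j) <;> simp [hermitianDilation, Matrix.sum_apply, RCLike.real_smul_eq_coe_mul]

variable [Fintype n] [Fintype m]

theorem hermitianDilation_mul_self (G : Matrix n m 𝕜) :
    hermitianDilation G * hermitianDilation G = fromBlocks (G * Gᴴ) 0 0 (Gᴴ * G) := by
  simp [hermitianDilation, fromBlocks_multiply]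

theorem sum_hermitianDilation_mul_self (B : κ → Matrix n m 𝕜) :
    ∑ k, hermitianDilation (B k) * hermitianDilation (B k)
      = fromBlocks (∑ k, B k * (B k)ᴴ) 0 0 (∑ k, (B k)ᴴ * B k) := by
  simp only [hermitianDilation_mul_self]
  ext (i | i) (j | j) <;> simp [Matrix.sum_apply]

theorem trace_sum_hermitianDilation_mul_self (B : κ → Matrix n m 𝕜) :
    (∑ k, hermitianDilation (B k) * hermitianDilation (B k)).trace
      = 2 * (∑ k, (B k)ᴴ * B k).trace := by
  rw [sum_hermitianDilation_mul_self, trace_fromBlocks, trace_sum, trace_sum, two_mul]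
  simp only [trace_mul_comm (B _)]

variable [DecidableEq m]

theorem re_trace_sum_conjTranspose_mul_self_le {B : κ → Matrix n m 𝕜} {v : ℝ}
    (hB : ∑ k, (B k)ᴴ * B k ≤ v • 1) :
    RCLike.re (∑ k, (B k)ᴴ * B k).trace ≤ v * Fintype.card m := by
  have h := (RCLike.nonneg_iff.1 (Matrix.le_iff.1 hB).trace_nonneg).1
  simpa [trace_sub, RCLike.smul_re] using h

variable [DecidableEq n]

theorem sum_hermitianDilation_mul_self_le {B : κ → Matrix n m 𝕜} {v : ℝ}
    (hB : ∑ k, (B k)ᴴ * B k ≤ v • 1) (hB' : ∑ k, B k * (B k)ᴴ ≤ v • 1) :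
    ∑ k, hermitianDilation (B k) * hermitianDilation (B k) ≤ v • 1 := by
  rw [sum_hermitianDilation_mul_self, Matrix.le_iff, ← fromBlocks_one, fromBlocks_smul]
  simpa [sub_eq_add_neg, fromBlocks_neg, fromBlocks_add] using
    posSemidef_fromBlocks_diagonal (Matrix.le_iff.1 hB') (Matrix.le_iff.1 hB)

theorem trace_hermitianDilation_pow (G : Matrix n m 𝕜) (p : ℕ) :
    (hermitianDilation G ^ (2 * (p + 1))).trace = 2 * ((Gᴴ * G) ^ (p + 1)).trace := by
  rw [pow_mul, pow_two, hermitianDilation_mul_self, fromBlocks_diagonal_pow,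
    trace_fromBlocks, trace_mul_pow_succ_comm, two_mul]

end

/-! ### Trace moments of a Gaussian matrix series -/

section

open scoped Matrix.Norms.Operator

/-- The real part of the trace as a continuous `ℝ`-linear functional, so that Stein's identity for
noncommutative words applies to it. -/
noncomputable def reTraceCLM (𝕜 n : Type*) [RCLike 𝕜] [Fintype n] [DecidableEq n] :
    Matrix n n 𝕜 →L[ℝ] ℝ :=
  LinearMap.toContinuousLinearMap (RCLike.reLm ∘ₗ traceLinearMap n ℝ 𝕜)

variable {κ 𝕜 n : Type*} [Fintype κ] [RCLike 𝕜] [Fintype n] [DecidableEq n]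

theorem integrable_re_trace_mul_pow (A : κ → Matrix n n 𝕜) (M N : Matrix n n 𝕜) (i j : ℕ) :
    Integrable (fun x => RCLike.re (M * (∑ k, x k • A k) ^ i * N * (∑ k, x k • A k) ^ j).trace)
      (stdGaussianPi κ) :=
  integrable_map_mul_sum_smul_pow A M N i j (reTraceCLM 𝕜 n)

theorem integral_re_trace_pow_le {A : κ → Matrix n n 𝕜} (hA : ∀ k, (A k).IsHermitian) (p : ℕ) :
    ∫ x, RCLike.re ((∑ k, x k • A k) ^ (2 * (p + 1))).trace ∂stdGaussianPi κ
      ≤ (2 * p + 1) * ∫ x, RCLike.re ((∑ k, A k * A k) * (∑ k, x k • A k) ^ (2 * p)).trace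
          ∂stdGaussianPi κ := by
  have hint := integrable_re_trace_mul_pow A
  have hint_sq (k : κ) : Integrable
      (fun x => RCLike.re (A k * A k * (∑ k, x k • A k) ^ (2 * p)).trace) (stdGaussianPi κ) := by
    simpa using hint (A k) (A k) 0 (2 * p)
  calc ∫ x, RCLike.re ((∑ k, x k • A k) ^ (2 * (p + 1))).trace ∂stdGaussianPi κ
      = ∑ k, ∑ i ∈ Finset.range (2 * p + 1), ∫ x, RCLike.re
          (A k * (∑ k, x k • A k) ^ (2 * p + 1 - 1 - i) * A k * (∑ k, x k • A k) ^ i).trace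
            ∂stdGaussianPi κ :=
        integral_map_sum_smul_pow_succ A (reTraceCLM 𝕜 n) (2 * p + 1)
    _ ≤ ∑ k, ∑ _i ∈ Finset.range (2 * p + 1),
          ∫ x, RCLike.re (A k * A k * (∑ k, x k • A k) ^ (2 * p)).trace ∂stdGaussianPi κ := by
        refine Finset.sum_le_sum fun k _ => Finset.sum_le_sum fun _ hi => ?_
        refine integral_mono (hint ..) (hint_sq k) fun x =>
          re_trace_mul_pow_mul_mul_pow_le (hA k) (isHermitian_sum_smul hA x) ?_
        have := Finset.mem_range.1 hi
        omega
    _ = (2 * p + 1) * ∫ x, RCLike.re ((∑ k, A k * A k) * (∑ k, x k • A k) ^ (2 * p)).trace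
          ∂stdGaussianPi κ := by
        simp only [Finset.sum_mul, trace_sum, map_sum]
        rw [integral_finsetSum _ fun k _ => hint_sq k, Finset.mul_sum]
        simp

theorem integral_re_trace_mul_pow_two_mul_le {A : κ → Matrix n n 𝕜}
    (hA : ∀ k, (A k).IsHermitian) {V : Matrix n n 𝕜} {v : ℝ} (hV : V ≤ v • 1) (p : ℕ) :
    ∫ x, RCLike.re (V * (∑ k, x k • A k) ^ (2 * p)).trace ∂stdGaussianPi κ
      ≤ v * ∫ x, RCLike.re ((∑ k, x k • A k) ^ (2 * p)).trace ∂stdGaussianPi κ := by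
  have hint := integrable_re_trace_mul_pow A
  rw [← integral_const_mul]
  refine integral_mono ?_ ?_ fun x =>
    re_trace_mul_pow_two_mul_le hV (isHermitian_sum_smul hA x) p
  · simpa using hint V 1 0 (2 * p)
  · simpa using (hint 1 1 0 (2 * p)).const_mul v

theorem integral_re_trace_pow_le_doubleFactorial {A : κ → Matrix n n 𝕜}
    (hA : ∀ k, (A k).IsHermitian) {v : ℝ} (hv : 0 ≤ v) (hAv : ∑ k, A k * A k ≤ v • 1) (p : ℕ) :
    ∫ x, RCLike.re ((∑ k, x k • A k) ^ (2 * (p + 1))).trace ∂stdGaussianPi κ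
      ≤ (2 * p + 1).doubleFactorial * v ^ p * RCLike.re (∑ k, A k * A k).trace := by
  induction p with
  | zero => simpa using integral_re_trace_pow_le hA 0
  | succ p ih =>
    calc _ ≤ (2 * (p + 1 : ℕ) + 1) * (v * ((2 * p + 1).doubleFactorial * v ^ p
            * RCLike.re (∑ k, A k * A k).trace)) := by
          refine (integral_re_trace_pow_le hA (p + 1)).trans ?_
          gcongr
          exact (integral_re_trace_mul_pow_two_mul_le hA hAv (p + 1)).trans (by gcongr)
      _ = _ := by
          rw [show 2 * (p + 1) + 1 = 2 * p + 1 + 2 by ring, Nat.doubleFactorial_add_two]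
          push_cast
          ring

end

section

variable {κ 𝕜 n m : Type*} [Fintype κ] [RCLike 𝕜] [Fintype n] [Fintype m] [DecidableEq m]

theorem integrable_re_trace_conjTranspose_mul_self_pow (B : κ → Matrix n m 𝕜) (p : ℕ) :
    Integrable (fun x => RCLike.re (((∑ k, x k • B k)ᴴ * ∑ k, x k • B k) ^ p).trace)
      (stdGaussianPi κ) := by
  classical
  rcases p with - | p
  · simp
  have h := integrable_re_trace_mul_pow (fun k => hermitianDilation (B k)) 1 1 (2 * (p + 1)) 0
  simp only [one_mul, mul_one, pow_zero, sum_smul_hermitianDilation, trace_hermitianDilation_pow,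
    RCLike.ofNat_mul_re] at h
  simpa using h.const_mul 2⁻¹

theorem integral_re_trace_conjTranspose_mul_self_pow_le [DecidableEq n]
    {B : κ → Matrix n m 𝕜} {v : ℝ} (hv : 0 ≤ v) (hB : ∑ k, (B k)ᴴ * B k ≤ v • 1)
    (hB' : ∑ k, B k * (B k)ᴴ ≤ v • 1) (p : ℕ) :
    ∫ x, RCLike.re (((∑ k, x k • B k)ᴴ * ∑ k, x k • B k) ^ p).trace ∂stdGaussianPi κ
      ≤ (2 * p - 1).doubleFactorial * v ^ p * Fintype.card m := by
  rcases p with - | p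
  · simp
  have hmoment := integral_re_trace_pow_le_doubleFactorial
    (fun k => isHermitian_hermitianDilation (B k)) hv (sum_hermitianDilation_mul_self_le hB hB') p
  simp only [sum_smul_hermitianDilation, trace_hermitianDilation_pow,
    trace_sum_hermitianDilation_mul_self, RCLike.ofNat_mul_re, integral_const_mul] at hmoment
  calc _ ≤ (2 * p + 1).doubleFactorial * v ^ p * RCLike.re (∑ k, (B k)ᴴ * B k).trace := by
        linarith
    _ ≤ (2 * p + 1).doubleFactorial * v ^ p * (v * Fintype.card m) := by
        gcongr
        exact re_trace_sum_conjTranspose_mul_self_le hB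
    _ = _ := by
        rw [show 2 * (p + 1) - 1 = 2 * p + 1 by omega]
        ring

end

/-! ### From moments to tails -/

theorem factorial_two_mul_eq_doubleFactorial (p : ℕ) :
    (2 * p).factorial = (2 * p - 1).doubleFactorial * (2 ^ p * p.factorial) := by
  rcases p with - | p
  · simp
  rw [show 2 * (p + 1) = 2 * p + 1 + 1 by ring, Nat.factorial_eq_mul_doubleFactorial,
    show 2 * p + 1 + 1 = 2 * (p + 1) by ring, Nat.doubleFactorial_two_mul, mul_comm]
  rfl

theorem ofReal_cosh_mul_eq_tsum (a b : ℝ) :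
    ENNReal.ofReal (Real.cosh (a * b))
      = ∑' p : ℕ, ENNReal.ofReal (a ^ (2 * p) / (2 * p).factorial)
          * ENNReal.ofReal (b ^ (2 * p)) := by
  have hsum := Real.hasSum_cosh (a * b)
  have hnonneg (c : ℝ) (p : ℕ) : 0 ≤ c ^ (2 * p) / (2 * p).factorial :=
    div_nonneg ((even_two_mul p).pow_nonneg _) (by positivity)
  rw [← hsum.tsum_eq, ENNReal.ofReal_tsum_of_nonneg (hnonneg _) hsum.summable]
  refine tsum_congr fun p => ?_
  rw [← ENNReal.ofReal_mul (hnonneg a p), mul_pow, mul_div_right_comm]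

section

variable {Ω : Type*} [MeasurableSpace Ω] {μ : Measure Ω} {Y : Ω → ℝ} {C v : ℝ}

theorem lintegral_cosh_mul_le (hY : AEMeasurable Y μ) (hC : 0 ≤ C) (hv : 0 ≤ v)
    (hmoment : ∀ p : ℕ, ∫⁻ ω, ENNReal.ofReal (Y ω ^ (2 * p)) ∂μ
      ≤ ENNReal.ofReal ((2 * p - 1).doubleFactorial * v ^ p * C)) (θ : ℝ) :
    ∫⁻ ω, ENNReal.ofReal (Real.cosh (θ * Y ω)) ∂μ
      ≤ ENNReal.ofReal (C * Real.exp (v * θ ^ 2 / 2)) := by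
  have hterm (p : ℕ) : θ ^ (2 * p) / (2 * p).factorial
        * ((2 * p - 1).doubleFactorial * v ^ p * C)
      = C * ((v * θ ^ 2 / 2) ^ p / p.factorial) := by
    have hdf : ((2 * p - 1).doubleFactorial : ℝ) ≠ 0 := by
      exact_mod_cast (Nat.doubleFactorial_pos _).ne'
    rw [factorial_two_mul_eq_doubleFactorial, pow_mul, div_pow, mul_pow]
    push_cast
    field_simp
  have hexp : HasSum (fun p : ℕ => C * ((v * θ ^ 2 / 2) ^ p / p.factorial))
      (C * Real.exp (v * θ ^ 2 / 2)) := by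
    rw [Real.exp_eq_exp_ℝ]
    exact (NormedSpace.expSeries_div_hasSum_exp _).mul_left C
  simp only [ofReal_cosh_mul_eq_tsum]
  rw [lintegral_tsum fun p => ((hY.pow_const _).ennreal_ofReal).const_mul _, ← hexp.tsum_eq,
    ENNReal.ofReal_tsum_of_nonneg (fun p => by positivity) hexp.summable]
  refine ENNReal.tsum_le_tsum fun p => ?_
  rw [lintegral_const_mul' _ _ ENNReal.ofReal_ne_top, ← hterm,
    ENNReal.ofReal_mul (div_nonneg ((even_two_mul p).pow_nonneg _) (by positivity))]
  gcongr
  exact hmoment p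

theorem measure_le_abs_le_of_moment_le (hY : AEMeasurable Y μ) (hC : 0 ≤ C) (hv : 0 < v)
    (hmoment : ∀ p : ℕ, ∫⁻ ω, ENNReal.ofReal (Y ω ^ (2 * p)) ∂μ
      ≤ ENNReal.ofReal ((2 * p - 1).doubleFactorial * v ^ p * C)) {t : ℝ} (ht : 0 ≤ t) :
    μ {ω | t ≤ |Y ω|} ≤ ENNReal.ofReal (2 * C * Real.exp (-t ^ 2 / (2 * v))) := by
  have hcosh {ω : Ω} (hω : t ≤ |Y ω|) :
      Real.exp (t / v * t) / 2 ≤ Real.cosh (t / v * Y ω) := by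
    rw [← Real.cosh_abs, abs_mul, abs_of_nonneg (div_nonneg ht hv.le), Real.cosh_eq]
    have : Real.exp (t / v * t) ≤ Real.exp (t / v * |Y ω|) := by gcongr
    linarith [Real.exp_pos (-(t / v * |Y ω|))]
  calc μ {ω | t ≤ |Y ω|}
      ≤ μ {ω | ENNReal.ofReal (Real.exp (t / v * t) / 2)
          ≤ ENNReal.ofReal (Real.cosh (t / v * Y ω))} :=
        measure_mono fun ω hω => ENNReal.ofReal_le_ofReal (hcosh hω)
    _ ≤ (∫⁻ ω, ENNReal.ofReal (Real.cosh (t / v * Y ω)) ∂μ)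
          / ENNReal.ofReal (Real.exp (t / v * t) / 2) :=
        meas_ge_le_lintegral_div
          (Real.measurable_cosh.comp_aemeasurable (hY.const_mul _)).ennreal_ofReal
          (ENNReal.ofReal_pos.2 (by positivity)).ne' ENNReal.ofReal_ne_top
    _ ≤ ENNReal.ofReal (C * Real.exp (v * (t / v) ^ 2 / 2))
          / ENNReal.ofReal (Real.exp (t / v * t) / 2) := by
        gcongr
        exact lintegral_cosh_mul_le hY hC hv.le hmoment _
    _ = ENNReal.ofReal (2 * C * Real.exp (-t ^ 2 / (2 * v))) := by
        rw [← ENNReal.ofReal_div_of_pos (by positivity), div_div_eq_mul_div, mul_right_comm,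
          mul_div_assoc, ← Real.exp_sub, mul_comm C]
        congr 3
        field_simp
        ring

end

section

open scoped Matrix.Norms.L2Operator

variable {κ 𝕜 n m : Type*} [Fintype κ] [RCLike 𝕜] [Fintype n] [DecidableEq n] [Fintype m]
  [DecidableEq m] {B : κ → Matrix n m 𝕜} {v t : ℝ}

theorem lintegral_l2_opNorm_pow_two_mul_le [Nonempty m] (hv : 0 ≤ v)
    (hB : ∑ k, (B k)ᴴ * B k ≤ v • 1) (hB' : ∑ k, B k * (B k)ᴴ ≤ v • 1) (p : ℕ) :
    ∫⁻ x, ENNReal.ofReal (‖∑ k, x k • B k‖ ^ (2 * p)) ∂stdGaussianPi κ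
      ≤ ENNReal.ofReal ((2 * p - 1).doubleFactorial * v ^ p * Fintype.card m) := by
  have htrace (x : κ → ℝ) := l2_opNorm_pow_two_mul_le_re_trace (∑ k, x k • B k) p
  calc _ ≤ ∫⁻ x, ENNReal.ofReal (RCLike.re
          (((∑ k, x k • B k)ᴴ * ∑ k, x k • B k) ^ p).trace) ∂stdGaussianPi κ :=
        lintegral_mono fun x => ENNReal.ofReal_le_ofReal (htrace x)
    _ = ENNReal.ofReal (∫ x, RCLike.re
          (((∑ k, x k • B k)ᴴ * ∑ k, x k • B k) ^ p).trace ∂stdGaussianPi κ) :=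
        (ofReal_integral_eq_lintegral_ofReal
          (integrable_re_trace_conjTranspose_mul_self_pow B p)
          (ae_of_all _ fun x => (by positivity : (0 : ℝ) ≤ _).trans (htrace x))).symm
    _ ≤ _ := ENNReal.ofReal_le_ofReal
        (integral_re_trace_conjTranspose_mul_self_pow_le hv hB hB' p)

theorem stdGaussianPi_setOf_le_l2_opNorm_le (hv : 0 < v)
    (hB : ∑ k, (B k)ᴴ * B k ≤ v • 1) (hB' : ∑ k, B k * (B k)ᴴ ≤ v • 1) (ht : 0 < t) :
    stdGaussianPi κ {x | t ≤ ‖∑ k, x k • B k‖}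
      ≤ ENNReal.ofReal (2 * Fintype.card m * Real.exp (-t ^ 2 / (2 * v))) := by
  have hcont : Continuous fun x : κ → ℝ => ‖∑ k, x k • B k‖ := by fun_prop
  rcases isEmpty_or_nonempty m
  · simp [Subsingleton.elim _ (0 : Matrix n m 𝕜), ht.not_ge]
  simpa using measure_le_abs_le_of_moment_le hcont.measurable.aemeasurable (Nat.cast_nonneg _) hv
    (lintegral_l2_opNorm_pow_two_mul_le hv.le hB hB') ht.le

theorem sigmaMax_eq_l2_opNorm {n m : ℕ} (G : Matrix (Fin n) (Fin m) ℝ) : sigmaMax G = ‖G‖ :=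
  rfl

theorem stmt2_general (hv : 0 < v)
    (hB : ∑ k, (B k)ᴴ * B k ≤ v • 1) (hB' : ∑ k, B k * (B k)ᴴ ≤ v • 1)
    {Ω : Type*} [MeasurableSpace Ω] {μ : Measure Ω} {z : κ → Ω → ℝ}
    (hindep : iIndepFun z μ) (hgauss : ∀ k, μ.map (z k) = gaussianReal 0 1) (ht : 0 < t) :
    μ {ω | t ≤ ‖∑ k, z k ω • B k‖}
      ≤ ENNReal.ofReal (2 * Fintype.card m * Real.exp (-t ^ 2 / (2 * v))) := by
  have := hindep.isProbabilityMeasure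
  have hz (k : κ) : AEMeasurable (z k) μ :=
    aemeasurable_of_map_neZero (by rw [hgauss]; infer_instance)
  have hlaw : μ.map (fun ω k => z k ω) = stdGaussianPi κ := by
    simpa only [hgauss] using (iIndepFun_iff_map_fun_eq_pi_map hz).1 hindep
  have hcont : Continuous fun x : κ → ℝ => ‖∑ k, x k • B k‖ := by fun_prop
  have htail := stdGaussianPi_setOf_le_l2_opNorm_le hv hB hB' ht
  rwa [← hlaw, Measure.map_apply_of_aemeasurable (aemeasurable_pi_lambda _ hz)
    (measurableSet_le measurable_const hcont.measurable)] at htail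

end

end

/-- Lemma 2.1, tail bound.
For a Gaussian matrix series `G = ∑ₖ zₖ Bₖ` with `∑ₖ Bₖᵀ Bₖ = Iₘ` and
`∑ₖ Bₖ Bₖᵀ ⪯ Iₙ`, for every `t > 0` we have `ℙ(σmax(G) > t) ≤ 2m e^{-t²/2}`. -/
theorem stmt2 {n m r : ℕ} (hm : 1 ≤ m) (hmn : m ≤ n)
    (B : Fin r → Matrix (Fin n) (Fin m) ℝ)
    (hBtB : ∑ k, (B k)ᵀ * B k = 1)
    (hBBt : ((1 : Matrix (Fin n) (Fin n) ℝ) - ∑ k, B k * (B k)ᵀ).PosSemidef)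
    {Ω : Type*} [MeasurableSpace Ω] (μ : Measure Ω) [IsProbabilityMeasure μ]
    (z : Fin r → Ω → ℝ)
    (hindep : iIndepFun z μ)
    (hgauss : ∀ k, Measure.map (z k) μ = gaussianReal 0 1) :
    ∀ t : ℝ, 0 < t →
      μ {ω | t < sigmaMax (∑ k, z k ω • B k)}
        ≤ ENNReal.ofReal (2 * m * Real.exp (-t ^ 2 / 2)) := by
  intro t ht
  calc _ ≤ μ {ω | t ≤ sigmaMax (∑ k, z k ω • B k)} :=
        measure_mono fun ω (hω : t < _) => hω.le
    _ ≤ _ := by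
        simpa [sigmaMax_eq_l2_opNorm] using stmt2_general (B := B) one_pos (by simp [hBtB])
          (by simpa [Matrix.le_iff] using hBBt) hindep hgauss ht
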